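/- Let ψ be the Haar wavelet and define c_s = i^{s+2}(1−2^{−s})/(s+1)! for s≥0, so that conj(ψ̂(u)) = Σ_{s=0}^∞ c_s u^s for all u∈ℝ (with the value at u=0 taken as the removable-singularity value 0). Fix b∈ℝ, b≠0, let f∈L¹(ℝ)∩L²(ℝ), and set h(u)=e^{ibu} f̂(u). Assume h(u)=O(|u|^ρ) as u→0 for some ρ>−1, and that there exist β>0 and complex coefficients b_r^± such that for every N∈ℕ, h(u)−e^{ibu}Σ_{r=0}^{N−1} b_r^+ u^{−r−β}=O(u^{−N−β}) and h(−u)−e^{−ibu}Σ_{r=0}^{N−1} b_r^− u^{−r−β}=O(u^{−N−β}) as u→+∞. Then for every n≥1 the generalized Mellin transforms M[h₊;s+1] and M[h₋;s+1] exist for s=0,…,n−1 (where h₊(u)=h(u), h₋(u)=h(−u) for u>0), the limits defining δ_n(a) below exist, and for every a>0: (W_ψf)(b,a) = (1/2π)·{ Σ_{s=0}^{n−1} c_s ( M[h₊;s+1] + (−1)^s M[h₋;s+1] ) a^{s+1/2} + δ_n(a) }, where δ_n(a) = a^{−1/2} lim_{ε→0+} [ ∫_0^∞ Φ_n(u) h(u/a)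 e^{−εu} du + ∫_0^∞ Φ_n(−u) h(−u/a) e^{−εu} du ] and Φ_n(u) := conj(ψ̂(u)) − Σ_{s=0}^{n−1} c_s u^s. -/

import Mathlib

open MeasureTheory Filter Set Topology Asymptotics

/-- The Fourier transform `f̂(ω) = ∫ e^{−itω} f(t) dt`. -/
noncomputable def fourierInt (f : ℝ → ℂ) (ω : ℝ) : ℂ :=
  ∫ t : ℝ, Complex.exp (-(Complex.I * t * ω)) * f t

/-- The wavelet transform `(W_ψ f)(b, a) = a^{−1/2} ∫ f(t) conj(ψ((t−b)/a)) dt`. -/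
noncomputable def waveletTransform (ψ f : ℝ → ℂ) (b a : ℝ) : ℂ :=
  (((Real.sqrt a)⁻¹ : ℝ) : ℂ) * ∫ t : ℝ, f t * (starRingEnd ℂ) (ψ ((t - b) / a))

/-- The Haar wavelet: `1` on `[0,1/2)`, `-1` on `[1/2,1)`, `0` otherwise. -/
noncomputable def haarWavelet : ℝ → ℂ := fun t =>
  if 0 ≤ t ∧ t < 1 / 2 then 1 else if 1 / 2 ≤ t ∧ t < 1 then -1 else 0

/-- The coefficients `c_s = i^{s+2}(1 − 2^{−s})/(s+1)!`. -/
noncomputable def haarCoeff (s : ℕ) : ℂ :=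
  Complex.I ^ (s + 2) * (1 - (2 : ℂ) ^ (-(s : ℤ))) / (((s + 1).factorial : ℂ))

/-- The remainder `Φ_n(u) = conj(ψ̂(u)) − Σ_{s=0}^{n−1} c_s u^s`. -/
noncomputable def haarHatConjRem (n : ℕ) (u : ℝ) : ℂ :=
  (starRingEnd ℂ) (fourierInt haarWavelet u) - ∑ s ∈ Finset.range n, haarCoeff s * (u : ℂ) ^ s

/-!
Put `g t = f (b + a t)`. The wavelet coefficient is `√a ∫ g conj ψ`, and `ĝ u = a⁻¹ h (u / a)`.
The correlation `x ↦ ∫ g (x + t) conj (ψ t) dt` is integrable and, as translation is continuous in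
`L¹` and `ψ` is bounded, continuous; its Fourier transform is `ĝ conj ψ̂`. Fourier inversion at `0`
with damping `e^{-ε|u|}` therefore gives a Parseval identity in which the Abel integral of
`conj (ψ̂ u) h (u / a)` over `ℝ` equals `2π √a (W_ψ f)(b, a)`, although neither the undamped
integral nor that of `u ^ s h (± u)` need converge.

The Mellin transforms `M[h±; s + 1]` are Abel integrals too. They exist because `h` is continuous
at `0`, and at infinity each term `e^{± ibu} u ^ p` of its expansion has an Abel integral: repeated
integration by parts, which divides by `ε ∓ ib` and hence needs `b ≠ 0`, lowers `p` below `-1`.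
Abel integration is linear and rescales under `u ↦ u / a`, so subtracting `∑ c_s u ^ s` from
`conj (ψ̂ u)` subtracts exactly the terms `c_s a ^ (s + 1) (M[h₊; s + 1] + (-1) ^ s M[h₋; s + 1])`.
-/

open scoped ComplexConjugate Convolution ENNReal FourierTransform

section FourierTransform

lemma fourierInt_eq_fourier (f : ℝ → ℂ) (ω : ℝ) :
    fourierInt f ω = 𝓕 f (ω / (2 * Real.pi)) := by
  rw [Real.fourier_real_eq_integral_exp_smul]
  refine integral_congr_ae (Eventually.of_forall fun t => ?_)
  have hphase : -2 * Real.pi * t * (ω / (2 * Real.pi)) = -(t * ω) := by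
    field_simp
  simp only [hphase, smul_eq_mul]
  push_cast
  ring_nf

lemma norm_fourierInt_le (f : ℝ → ℂ) (ω : ℝ) : ‖fourierInt f ω‖ ≤ ∫ t, ‖f t‖ := by
  rw [fourierInt_eq_fourier]
  exact VectorFourier.norm_fourierIntegral_le_integral_norm _ _ _ _ _

lemma continuous_fourierInt {f : ℝ → ℂ} (hf : Integrable f) : Continuous (fourierInt f) := by
  have hfourier : Continuous (𝓕 f) :=
    VectorFourier.fourierIntegral_continuous Real.continuous_fourierChar continuous_inner hf
  simp only [funext (fourierInt_eq_fourier f)]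
  fun_prop

variable {E : Type*} [NormedAddCommGroup E]

lemma integral_eq_integral_Ioi_add_integral_Ioi_neg [NormedSpace ℝ E] {F : ℝ → E}
    (hF : Integrable F) :
    ∫ u, F u = (∫ u in Ioi 0, F u) + ∫ u in Ioi 0, F (-u) := by
  rw [integral_comp_neg_Ioi, neg_zero, add_comm,
    intervalIntegral.integral_Iic_add_Ioi hF.integrableOn hF.integrableOn]

lemma integrable_exp_neg_mul_abs {a : ℝ} (ha : 0 < a) :
    Integrable fun x : ℝ => Real.exp (-a * |x|) := by
  rw [← integrableOn_univ, ← Iic_union_Ioi (a := (0 : ℝ)), integrableOn_union]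
  constructor
  · refine (integrableOn_exp_mul_Iic ha 0).congr_fun (fun x hx => ?_) measurableSet_Iic
    simp only [abs_of_nonpos (mem_Iic.1 hx), neg_mul_neg]
  · refine (integrableOn_exp_mul_Ioi (neg_lt_zero.2 ha) 0).congr_fun (fun x hx => ?_)
      measurableSet_Ioi
    simp only [abs_of_pos (mem_Ioi.1 hx)]

lemma fourier_exp_neg_mul_abs {ε : ℝ} (hε : 0 < ε) (x : ℝ) :
    𝓕 (fun ν : ℝ => (Real.exp (-(2 * Real.pi * ε) * |ν|) : ℂ)) x =
      ((ε / (Real.pi * (ε ^ 2 + x ^ 2)) : ℝ) : ℂ) := by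
  have hhalf {z : ℂ} (hz : 0 < z.re) :
      ∫ ν in Ioi (0 : ℝ), Complex.exp (-(2 * Real.pi * z) * ν) = (2 * Real.pi * z)⁻¹ := by
    rw [integral_exp_mul_complex_Ioi (by simp [Real.pi_pos, hz])]
    simp [neg_div_neg_eq]
  have hre (y : ℝ) : 0 < (ε + y * Complex.I : ℂ).re := by simpa using hε
  have hne (y : ℝ) : (ε + y * Complex.I : ℂ) ≠ 0 := fun h => by simpa [h] using hre y
  rw [Real.fourier_real_eq_integral_exp_smul, integral_eq_integral_Ioi_add_integral_Ioi_neg]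
  · calc
      _ = (∫ ν in Ioi (0 : ℝ), Complex.exp (-(2 * Real.pi * (ε + x * Complex.I)) * ν)) +
          ∫ ν in Ioi (0 : ℝ), Complex.exp (-(2 * Real.pi * (ε + (-x : ℝ) * Complex.I)) * ν) := by
        congr 1 <;> refine setIntegral_congr_fun measurableSet_Ioi fun ν hν => ?_ <;>
        · simp only [abs_neg, abs_of_pos (mem_Ioi.1 hν), smul_eq_mul, Complex.ofReal_exp,
            ← Complex.exp_add]
          push_cast
          ring_nf
      _ = _ := by
        have hmul : (ε + x * Complex.I : ℂ) * (ε + (-x : ℝ) * Complex.I) = ε ^ 2 + x ^ 2 := by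
          push_cast
          linear_combination (-(x : ℂ) ^ 2) * Complex.I_sq
        have hne_pos := hne x
        have hne_neg := hne (-x)
        rw [hhalf (hre _), hhalf (hre _)]
        simp only [Complex.ofReal_neg, neg_mul, ← sub_eq_add_neg] at hmul hne_neg ⊢
        push_cast
        rw [← hmul]
        field_simp
        ring
  · refine (integrable_exp_neg_mul_abs (a := 2 * Real.pi * ε) (by positivity)).ofReal.bdd_mul
      (c := 1) (by fun_prop) (Eventually.of_forall fun ν => ?_)
    rw [Complex.norm_exp_ofReal_mul_I]

variable [NormedSpace ℂ E] [CompleteSpace E]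

lemma tendsto_integral_exp_neg_mul_abs_smul_fourier {G : ℝ → E} (hG : Integrable G)
    (hG₀ : ContinuousAt G 0) :
    Tendsto (fun ε : ℝ => ∫ ν, (Real.exp (-(2 * Real.pi * ε) * |ν|) : ℂ) • 𝓕 G ν)
      (𝓝[>] 0) (𝓝 (G 0)) := by
  -- The Poisson kernel: the Fourier transform of the damping factor is its dilate by `ε⁻¹`.
  let φ : ℝ → ℝ := fun x => Real.pi⁻¹ * (1 + x ^ 2)⁻¹
  have hφ_nonneg (x : ℝ) : 0 ≤ φ x := by positivity
  have hφ_integral : ∫ x, φ x = 1 := by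
    rw [integral_const_mul, integral_univ_inv_one_add_sq, inv_mul_cancel₀ Real.pi_ne_zero]
  have hφ_decay : Tendsto (fun x : ℝ => ‖x‖ ^ Module.finrank ℝ ℝ * φ x)
      (Bornology.cobounded ℝ) (𝓝 0) := by
    refine squeeze_zero (fun x => by positivity) (fun x => ?_)
      (tendsto_inv_atTop_zero.comp tendsto_norm_cobounded_atTop)
    rcases eq_or_ne x 0 with rfl | hx
    · simp
    · have hx : 0 < |x| := abs_pos.2 hx
      simp only [φ, Module.finrank_self, pow_one, Function.comp_apply, Real.norm_eq_abs]
      rw [← mul_inv, ← div_eq_mul_inv, le_inv_comm₀ (by positivity) hx, inv_div,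
        le_div_iff₀ hx, ← sq, sq_abs]
      nlinarith [Real.pi_gt_three, sq_nonneg x]
  refine ((tendsto_integral_comp_smul_smul_of_integrable hφ_nonneg hφ_integral hφ_decay hG
    hG₀).comp tendsto_inv_nhdsGT_zero).congr' ?_
  filter_upwards [self_mem_nhdsWithin] with ε (hε : 0 < ε)
  have hkernel : Integrable fun ν : ℝ => (Real.exp (-(2 * Real.pi * ε) * |ν|) : ℂ) :=
    (integrable_exp_neg_mul_abs (by positivity)).ofReal
  have hself_adjoint := VectorFourier.integral_fourierIntegral_smul_eq_flip (L := innerₗ ℝ)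
    Real.continuous_fourierChar continuous_inner hkernel hG
  rw [flip_innerₗ] at hself_adjoint
  refine Eq.trans ?_ hself_adjoint
  refine integral_congr_ae (Eventually.of_forall fun x => ?_)
  refine Eq.trans ?_ (congrArg (· • G x) (fourier_exp_neg_mul_abs hε x)).symm
  simp only [φ, Module.finrank_self, pow_one, smul_eq_mul, Complex.coe_smul]
  congr 1
  field_simp

end FourierTransform

section AbelIntegral

/-- `M` is the Abel integral `lim_{ε → 0+} ∫_S F(u) e^{-ε|u|} du`. The generalized Mellin transform
`M[h; s + 1]` is the case `S = (0, ∞)`, `F u = u ^ s * h u`. The damped integrands are required to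
be integrable, so that none of the integrals is a junk value. -/
def HasAbelIntegralOn (F : ℝ → ℂ) (S : Set ℝ) (M : ℂ) : Prop :=
  (∀ ε : ℝ, 0 < ε → IntegrableOn (fun u => F u * (Real.exp (-ε * |u|) : ℂ)) S) ∧
    Tendsto (fun ε : ℝ => ∫ u in S, F u * (Real.exp (-ε * |u|) : ℂ)) (𝓝[>] 0) (𝓝 M)

lemma hasAbelIntegralOn_of_integrableOn {F : ℝ → ℂ} {S : Set ℝ} (hF : IntegrableOn F S) :
    HasAbelIntegralOn F S (∫ u in S, F u) := by
  have hbound {ε : ℝ} (hε : 0 < ε) (u : ℝ) : ‖(Real.exp (-ε * |u|) : ℂ)‖ ≤ 1 := by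
    rw [Complex.norm_real, Real.norm_of_nonneg (Real.exp_pos _).le, Real.exp_le_one_iff, neg_mul]
    exact neg_nonpos.2 (by positivity)
  have hint {ε : ℝ} (hε : 0 < ε) : IntegrableOn (fun u => F u * (Real.exp (-ε * |u|) : ℂ)) S :=
    hF.mul_bdd (c := 1) (by fun_prop) (Eventually.of_forall (hbound hε))
  refine ⟨fun ε => hint, tendsto_integral_filter_of_dominated_convergence (fun u => ‖F u‖)
    ?_ ?_ hF.norm (Eventually.of_forall fun u => ?_)⟩
  · filter_upwards [self_mem_nhdsWithin] with ε hε using (hint hε).aestronglyMeasurable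
  · filter_upwards [self_mem_nhdsWithin] with ε hε
    refine Eventually.of_forall fun u => ?_
    rw [norm_mul]
    exact mul_le_of_le_one_right (norm_nonneg _) (hbound hε u)
  · have hcont : Continuous fun ε : ℝ => F u * (Real.exp (-ε * |u|) : ℂ) := by fun_prop
    simpa using (hcont.tendsto 0).mono_left (nhdsWithin_le_nhds (s := Ioi 0))

namespace HasAbelIntegralOn

variable {F G : ℝ → ℂ} {S T : Set ℝ} {M N : ℂ}

lemma congr (hF : HasAbelIntegralOn F S M) (hS : MeasurableSet S) (hFG : EqOn F G S) :
    HasAbelIntegralOn G S M := by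
  have heq (ε : ℝ) : EqOn (fun u => F u * (Real.exp (-ε * |u|) : ℂ))
      (fun u => G u * (Real.exp (-ε * |u|) : ℂ)) S := fun u hu => by simp only [hFG hu]
  exact ⟨fun ε hε => (hF.1 ε hε).congr_fun (heq ε) hS,
    hF.2.congr fun ε => setIntegral_congr_fun hS (heq ε)⟩

lemma const_mul (c : ℂ) (hF : HasAbelIntegralOn F S M) :
    HasAbelIntegralOn (fun u => c * F u) S (c * M) := by
  simp only [HasAbelIntegralOn, mul_assoc, integral_const_mul]
  exact ⟨fun ε hε => (hF.1 ε hε).const_mul c, hF.2.const_mul c⟩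

lemma add (hF : HasAbelIntegralOn F S M) (hG : HasAbelIntegralOn G S N) :
    HasAbelIntegralOn (fun u => F u + G u) S (M + N) := by
  simp only [HasAbelIntegralOn, add_mul]
  refine ⟨fun ε hε => (hF.1 ε hε).add (hG.1 ε hε), (hF.2.add hG.2).congr' ?_⟩
  filter_upwards [self_mem_nhdsWithin] with ε hε
    using (integral_add (hF.1 ε hε) (hG.1 ε hε)).symm

lemma sub (hF : HasAbelIntegralOn F S M) (hG : HasAbelIntegralOn G S N) :
    HasAbelIntegralOn (fun u => F u - G u) S (M - N) := by
  simpa [sub_eq_add_neg] using hF.add (hG.const_mul (-1))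

lemma finset_sum {ι : Type*} {t : Finset ι} {F : ι → ℝ → ℂ} {M : ι → ℂ}
    (hF : ∀ i ∈ t, HasAbelIntegralOn (F i) S (M i)) :
    HasAbelIntegralOn (fun u => ∑ i ∈ t, F i u) S (∑ i ∈ t, M i) := by
  classical
  induction t using Finset.induction_on with
  | empty => simp [HasAbelIntegralOn, IntegrableOn]
  | insert i t hi ih =>
    simp only [Finset.sum_insert hi]
    exact (hF i (Finset.mem_insert_self i t)).add
      (ih fun j hj => hF j (Finset.mem_insert_of_mem hj))

lemma union (hS : HasAbelIntegralOn F S M) (hT : HasAbelIntegralOn F T N) (hST : Disjoint S T)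
    (hT_meas : MeasurableSet T) : HasAbelIntegralOn F (S ∪ T) (M + N) := by
  refine ⟨fun ε hε => (hS.1 ε hε).union (hT.1 ε hε), (hS.2.add hT.2).congr' ?_⟩
  filter_upwards [self_mem_nhdsWithin] with ε hε
    using (setIntegral_union hST hT_meas (hS.1 ε hε) (hT.1 ε hε)).symm

lemma univ_of_Ioi (hpos : HasAbelIntegralOn F (Ioi 0) M)
    (hneg : HasAbelIntegralOn (fun u => F (-u)) (Ioi 0) N) : HasAbelIntegralOn F univ (M + N) := by
  have hIic : HasAbelIntegralOn F (Iic 0) N := by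
    constructor
    · intro ε hε
      rw [← (Measure.measurePreserving_neg volume).integrableOn_comp_preimage
        (Homeomorph.neg ℝ).measurableEmbedding]
      simpa [Function.comp_def, integrableOn_Ici_iff_integrableOn_Ioi] using hneg.1 ε hε
    · refine hneg.2.congr fun ε => ?_
      simpa using integral_comp_neg_Ioi (0 : ℝ) fun u => F u * (Real.exp (-ε * |u|) : ℂ)
  rw [← Iic_union_Ioi (a := (0 : ℝ)), add_comm]
  exact hIic.union hpos (Iic_disjoint_Ioi le_rfl) measurableSet_Ioi

lemma comp_div {a : ℝ} (ha : 0 < a) (hF : HasAbelIntegralOn F univ M) :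
    HasAbelIntegralOn (fun u => F (u / a)) univ (a * M) := by
  have hdamped (ε u : ℝ) : F (u / a) * (Real.exp (-ε * |u|) : ℂ) =
      F (u / a) * (Real.exp (-(a * ε) * |u / a|) : ℂ) := by
    rw [abs_div, abs_of_pos ha]
    field_simp
  have hε_tendsto : Tendsto (fun ε => a * ε) (𝓝[>] 0) (𝓝[>] 0) :=
    tendsto_iff_comap.2 (comap_mulLeft_nhdsGT_zero ha).ge
  simp only [HasAbelIntegralOn, integrableOn_univ, setIntegral_univ, hdamped] at hF ⊢
  refine ⟨fun ε hε => (hF.1 (a * ε) (by positivity)).comp_div ha.ne',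
    ((hF.2.comp hε_tendsto).const_mul (a : ℂ)).congr fun ε => ?_⟩
  rw [Measure.integral_comp_div (fun v => F v * (Real.exp (-(a * ε) * |v|) : ℂ)), abs_of_pos ha,
    Complex.real_smul, Function.comp_apply]

lemma tendsto_integral_Ioi (hF : HasAbelIntegralOn F (Ioi 0) M) :
    Tendsto (fun ε : ℝ => ∫ u in Ioi 0, F u * (Real.exp (-ε * u) : ℂ)) (𝓝[>] 0) (𝓝 M) :=
  hF.2.congr fun ε => setIntegral_congr_fun measurableSet_Ioi fun u hu => by
    simp only [abs_of_pos (mem_Ioi.1 hu)]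

lemma tendsto_integral_Ioi_add_integral_Ioi_neg (hF : HasAbelIntegralOn F univ M) :
    Tendsto (fun ε : ℝ => (∫ u in Ioi 0, F u * (Real.exp (-ε * u) : ℂ)) +
      ∫ u in Ioi 0, F (-u) * (Real.exp (-ε * u) : ℂ)) (𝓝[>] 0) (𝓝 M) := by
  refine hF.2.congr' ?_
  filter_upwards [self_mem_nhdsWithin] with ε hε
  rw [setIntegral_univ, integral_eq_integral_Ioi_add_integral_Ioi_neg
    (integrableOn_univ.1 (hF.1 ε hε))]
  congr 1 <;> refine setIntegral_congr_fun measurableSet_Ioi fun u hu => ?_ <;>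
  simp only [abs_neg, abs_of_pos (mem_Ioi.1 hu)]

end HasAbelIntegralOn

end AbelIntegral

section ExpIntegral

/-- The generalized exponential integral `∫_1^∞ u^p e^{-zu} du`, which is `E_{-p}(z)` in the usual
notation. The sign of the exponent is that of the powers in an asymptotic expansion. -/
noncomputable def expIntegral (p : ℝ) (z : ℂ) : ℂ :=
  ∫ u in Ioi (1 : ℝ), Complex.exp (-z * u) * ((u ^ p : ℝ) : ℂ)

lemma continuousOn_exp_neg_mul_rpow (p : ℝ) (z : ℂ) :
    ContinuousOn (fun u : ℝ => Complex.exp (-z * u) * ((u ^ p : ℝ) : ℂ)) (Ioi 0) := by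
  have hpow : ContinuousOn (fun u : ℝ => u ^ p) (Ioi 0) :=
    continuousOn_id.rpow_const fun u hu => Or.inl (ne_of_gt hu)
  fun_prop

lemma isBigO_exp_neg_mul_rpow {z : ℂ} (hz : 0 < z.re) (p : ℝ) :
    (fun u : ℝ => Complex.exp (-z * u) * ((u ^ p : ℝ) : ℂ)) =O[atTop]
      fun u => Real.exp (-(z.re / 2) * u) := by
  have hexp : (fun u : ℝ => Complex.exp (-z * u)) =O[atTop] fun u => Real.exp (-z.re * u) :=
    IsBigO.of_norm_eventuallyLE (Eventually.of_forall fun u => by simp [Complex.norm_exp])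
  have hpow : (fun u : ℝ => ((u ^ p : ℝ) : ℂ)) =O[atTop] fun u => Real.exp (z.re / 2 * u) :=
    (Complex.isBigO_ofReal_left.2 (isLittleO_rpow_exp_pos_mul_atTop p (half_pos hz)).isBigO)
  refine (hexp.mul hpow).congr_right fun u => ?_
  rw [← Real.exp_add]
  ring_nf

lemma integrableOn_exp_neg_mul_rpow {z : ℂ} (hz : 0 < z.re) (p : ℝ) :
    IntegrableOn (fun u : ℝ => Complex.exp (-z * u) * ((u ^ p : ℝ) : ℂ)) (Ioi 1) :=
  ((((continuousOn_exp_neg_mul_rpow p z).mono (Ici_subset_Ioi.2 one_pos)).locallyIntegrableOn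
    measurableSet_Ici).integrableOn_of_isBigO_atTop (isBigO_exp_neg_mul_rpow hz p)
    ⟨Ioi 0, Ioi_mem_atTop 0, exp_neg_integrableOn_Ioi 0 (half_pos hz)⟩).mono_set Ioi_subset_Ici_self

lemma mul_expIntegral {z : ℂ} (hz : 0 < z.re) (p : ℝ) :
    z * expIntegral p z = p * expIntegral (p - 1) z + Complex.exp (-z) := by
  have hderiv (u : ℝ) (hu : u ∈ Ici 1) :
      HasDerivAt (fun u : ℝ => Complex.exp (-z * u) * ((u ^ p : ℝ) : ℂ))
        (p * (Complex.exp (-z * u) * ((u ^ (p - 1) : ℝ) : ℂ)) -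
          z * (Complex.exp (-z * u) * ((u ^ p : ℝ) : ℂ))) u := by
    have hexp : HasDerivAt (fun u : ℝ => Complex.exp (-z * u))
        (Complex.exp (-z * u) * (-z * 1)) u :=
      (Complex.ofRealCLM.hasDerivAt.const_mul (-z)).cexp
    have hpow : HasDerivAt (fun u : ℝ => ((u ^ p : ℝ) : ℂ)) (((p * u ^ (p - 1) : ℝ)) : ℂ) u :=
      (Real.hasDerivAt_rpow_const (Or.inl (zero_lt_one.trans_le hu).ne')).ofReal_comp
    refine (hexp.mul hpow).congr_deriv ?_
    push_cast
    ring
  have hint (q : ℝ) := integrableOn_exp_neg_mul_rpow hz q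
  have hzero : Tendsto (fun u : ℝ => Complex.exp (-z * u) * ((u ^ p : ℝ) : ℂ)) atTop (𝓝 0) :=
    (isBigO_exp_neg_mul_rpow hz p).trans_tendsto <| Real.tendsto_exp_atBot.comp <|
      tendsto_id.const_mul_atTop_of_neg (neg_lt_zero.2 (half_pos hz))
  have hftc := integral_Ioi_of_hasDerivAt_of_tendsto' hderiv
    (((hint (p - 1)).const_mul _).sub ((hint p).const_mul _)) hzero
  rw [integral_sub ((hint (p - 1)).const_mul _) ((hint p).const_mul _), integral_const_mul,
    integral_const_mul] at hftc
  simp only [Real.one_rpow, Complex.ofReal_one, mul_one, zero_sub] at hftc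
  simp only [expIntegral]
  linear_combination -hftc

lemma tendsto_expIntegral_of_lt_neg_one {p : ℝ} (hp : p < -1) (z₀ : ℂ) :
    Tendsto (expIntegral p) (𝓝[{z | 0 < z.re}] z₀) (𝓝 (expIntegral p z₀)) := by
  refine tendsto_integral_filter_of_dominated_convergence (fun u => u ^ p)
    (Eventually.of_forall fun z => ?_) ?_ (integrableOn_Ioi_rpow_of_lt hp one_pos)
    (Eventually.of_forall fun u => ?_)
  · exact ((continuousOn_exp_neg_mul_rpow p z).mono
      (Ioi_subset_Ioi zero_le_one)).aestronglyMeasurable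
      measurableSet_Ioi
  · filter_upwards [self_mem_nhdsWithin] with z (hz : 0 < z.re)
    filter_upwards [ae_restrict_mem measurableSet_Ioi] with u (hu : 1 < u)
    have hu₀ : 0 < u := one_pos.trans hu
    have hpow : 0 ≤ u ^ p := Real.rpow_nonneg hu₀.le p
    rw [norm_mul, Complex.norm_exp, Complex.norm_real, Real.norm_of_nonneg hpow]
    refine mul_le_of_le_one_left hpow (Real.exp_le_one_iff.2 ?_)
    simpa using (mul_pos hz hu₀).le
  · have hcont : Continuous fun z : ℂ => Complex.exp (-z * u) * ((u ^ p : ℝ) : ℂ) := by fun_prop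
    exact hcont.continuousWithinAt

lemma exists_tendsto_expIntegral {z₀ : ℂ} (hz₀ : z₀ ≠ 0) (p : ℝ) :
    ∃ M, Tendsto (expIntegral p) (𝓝[{z | 0 < z.re}] z₀) (𝓝 M) := by
  -- Integration by parts lowers `p` by one and divides by `z`, which stays away from `0`.
  obtain ⟨k, hk⟩ := exists_nat_gt (p + 1)
  induction k generalizing p with
  | zero =>
    exact ⟨_, tendsto_expIntegral_of_lt_neg_one (by norm_num at hk; linarith) z₀⟩
  | succ k ih =>
    obtain ⟨M, hM⟩ := ih (p - 1) (by push_cast at hk; linarith)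
    have hz : Tendsto (fun z : ℂ => z) (𝓝[{z | 0 < z.re}] z₀) (𝓝 z₀) :=
      tendsto_id.mono_left nhdsWithin_le_nhds
    refine ⟨_, (((hM.const_mul (p : ℂ)).add hz.neg.cexp).div hz hz₀).congr' ?_⟩
    filter_upwards [self_mem_nhdsWithin] with z (hz_re : 0 < z.re)
    have hz_ne : z ≠ 0 := fun h => by simp [h] at hz_re
    rw [Pi.div_apply, ← mul_expIntegral hz_re, mul_div_cancel_left₀ _ hz_ne]

lemma exists_hasAbelIntegralOn_exp_mul_rpow {c : ℝ} (hc : c ≠ 0) (p : ℝ) :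
    ∃ M, HasAbelIntegralOn (fun u : ℝ => Complex.exp (Complex.I * c * u) * ((u ^ p : ℝ) : ℂ))
      (Ioi 1) M := by
  have hdamped (ε : ℝ) : EqOn
      (fun u : ℝ => Complex.exp (-(ε - Complex.I * c) * u) * ((u ^ p : ℝ) : ℂ))
      (fun u : ℝ => Complex.exp (Complex.I * c * u) * ((u ^ p : ℝ) : ℂ) *
        (Real.exp (-ε * |u|) : ℂ)) (Ioi 1) := fun u (hu : 1 < u) => by
    simp only [abs_of_pos (one_pos.trans hu), Complex.ofReal_exp]
    rw [mul_right_comm, ← Complex.exp_add]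
    push_cast
    ring_nf
  obtain ⟨M, hM⟩ := exists_tendsto_expIntegral (z₀ := -(Complex.I * c)) (by simpa using hc) p
  have hpath : Tendsto (fun ε : ℝ => (ε - Complex.I * c : ℂ)) (𝓝[>] 0)
      (𝓝[{z | 0 < z.re}] (-(Complex.I * c))) := by
    have hcont : Continuous fun ε : ℝ => (ε - Complex.I * c : ℂ) := by fun_prop
    refine tendsto_nhdsWithin_iff.2 ⟨?_, ?_⟩
    · simpa using (hcont.tendsto 0).mono_left nhdsWithin_le_nhds
    · filter_upwards [self_mem_nhdsWithin] with ε hε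
      simpa using hε
  refine ⟨M, fun ε hε => ?_, (hM.comp hpath).congr fun ε => ?_⟩
  · exact (integrableOn_exp_neg_mul_rpow (by simpa using hε) p).congr_fun (hdamped ε)
      measurableSet_Ioi
  · exact setIntegral_congr_fun measurableSet_Ioi (hdamped ε)

end ExpIntegral

section Expansion

lemma exists_hasAbelIntegralOn_Ioi_one_of_isBigO {ι : Type*} {c : ℝ} (hc : c ≠ 0) {g : ℝ → ℂ}
    (hg : ContinuousOn g (Ici 1)) {t : Finset ι} {B : ι → ℂ} {p : ι → ℝ} {q : ℝ} (hq : q < -1)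
    (hexp : (fun u : ℝ => g u - Complex.exp (Complex.I * c * u) *
      ∑ i ∈ t, B i * ((u ^ p i : ℝ) : ℂ)) =O[atTop] fun u => u ^ q) :
    ∃ M, HasAbelIntegralOn g (Ioi 1) M := by
  choose M hM using fun i => exists_hasAbelIntegralOn_exp_mul_rpow hc (p i)
  have hmain := HasAbelIntegralOn.finset_sum (t := t) fun i _ => (hM i).const_mul (B i)
  have hsum (u : ℝ) : Complex.exp (Complex.I * c * u) * ∑ i ∈ t, B i * ((u ^ p i : ℝ) : ℂ) =
      ∑ i ∈ t, B i * (Complex.exp (Complex.I * c * u) * ((u ^ p i : ℝ) : ℂ)) := by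
    simp only [Finset.mul_sum, mul_left_comm]
  simp only [hsum] at hexp
  have hterm (i : ι) := continuousOn_exp_neg_mul_rpow (p i) (-(Complex.I * c))
  simp only [neg_neg] at hterm
  have hcont : ContinuousOn (fun u : ℝ => g u -
      ∑ i ∈ t, B i * (Complex.exp (Complex.I * c * u) * ((u ^ p i : ℝ) : ℂ))) (Ici 1) :=
    hg.sub (continuousOn_finsetSum _ fun i _ => continuousOn_const.mul
      ((hterm i).mono (Ici_subset_Ioi.2 one_pos)))
  have hremainder : IntegrableOn _ (Ioi (1 : ℝ)) :=
    ((hcont.locallyIntegrableOn measurableSet_Ici).integrableOn_of_isBigO_atTop hexp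
      ⟨Ioi 1, Ioi_mem_atTop 1, integrableOn_Ioi_rpow_of_lt hq one_pos⟩).mono_set
      Ioi_subset_Ici_self
  exact ⟨_, ((hasAbelIntegralOn_of_integrableOn hremainder).add hmain).congr measurableSet_Ioi
    fun u _ => sub_add_cancel _ _⟩

lemma isBigO_pow_mul_sub_mul_sum {g φ : ℝ → ℂ} {β : ℝ} {B : ℕ → ℂ} {N : ℕ}
    (hexp : (fun u : ℝ => g u - φ u * ∑ r ∈ Finset.range N, B r * ((u ^ (-(r : ℝ) - β) : ℝ) : ℂ))
      =O[atTop] fun u => u ^ (-(N : ℝ) - β)) (s : ℕ) :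
    (fun u : ℝ => ((u ^ s : ℝ) : ℂ) * g u -
      φ u * ∑ r ∈ Finset.range N, B r * ((u ^ (s - r - β : ℝ) : ℝ) : ℂ))
      =O[atTop] fun u => u ^ (s - N - β : ℝ) := by
  have hpow : (fun u : ℝ => ((u ^ s : ℝ) : ℂ)) =O[atTop] fun u => u ^ s :=
    Complex.isBigO_ofReal_left.2 (isBigO_refl _ _)
  have hrpow {u : ℝ} (hu : 0 < u) (r : ℕ) : u ^ (s - r - β : ℝ) = u ^ s * u ^ (-(r : ℝ) - β) := by
    rw [← Real.rpow_natCast, ← Real.rpow_add hu]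
    ring_nf
  refine (hpow.mul hexp).congr' ?_ ?_ <;> filter_upwards [eventually_gt_atTop 0] with u hu
  · simp only [hrpow hu, mul_sub, Finset.mul_sum, Complex.ofReal_mul]
    congr! 2
    ring
  · exact (hrpow hu N).symm

lemma exists_hasAbelIntegralOn_pow_mul {c : ℝ} (hc : c ≠ 0) {g : ℝ → ℂ} (hg : Continuous g)
    {β : ℝ} {B : ℕ → ℂ}
    (hexp : ∀ N : ℕ,
      (fun u : ℝ => g u - Complex.exp (Complex.I * c * u) *
          ∑ r ∈ Finset.range N, B r * ((u ^ (-(r : ℝ) - β) : ℝ) : ℂ))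
        =O[atTop] fun u => u ^ (-(N : ℝ) - β)) (s : ℕ) :
    ∃ M, HasAbelIntegralOn (fun u => ((u ^ s : ℝ) : ℂ) * g u) (Ioi 0) M := by
  have hcont : Continuous fun u : ℝ => ((u ^ s : ℝ) : ℂ) * g u := by fun_prop
  obtain ⟨N, hN⟩ := exists_nat_gt (s + 1 - β)
  obtain ⟨M, hM⟩ := exists_hasAbelIntegralOn_Ioi_one_of_isBigO hc hcont.continuousOn
    (by linarith : (s - N - β : ℝ) < -1) (isBigO_pow_mul_sub_mul_sum (hexp N) s)
  have hnear_zero := hasAbelIntegralOn_of_integrableOn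
    ((hcont.integrableOn_Icc (a := 0) (b := 1)).mono_set Ioc_subset_Icc_self)
  rw [← Ioc_union_Ioi_eq_Ioi zero_le_one]
  exact ⟨_, hnear_zero.union hM (Ioc_disjoint_Ioi le_rfl) measurableSet_Ioi⟩

end Expansion

section Correlation

lemma continuous_integral_add_mul {p q : ℝ≥0∞} [Fact (1 ≤ p)] [Fact (p ≠ ∞)] [Fact (1 ≤ q)]
    [ENNReal.HolderConjugate p q] {g φ : ℝ → ℂ} (hg : MemLp g p) (hφ : MemLp φ q) :
    Continuous fun x => ∫ t, g (x + t) * φ t := by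
  let pairing := (ContinuousLinearMap.mul ℂ ℂ).lpPairing (volume : Measure ℝ) p q
  have hcont : Continuous fun x : ℝ => pairing (DomAddAct.mk x +ᵥ hg.toLp) hφ.toLp := by fun_prop
  refine hcont.congr fun x => ?_
  have htranslate := hg.comp_measurePreserving (measurePreserving_vadd x (volume : Measure ℝ))
  rw [DomAddAct.mk_vadd_toLp, ContinuousLinearMap.lpPairing_eq_integral]
  refine integral_congr_ae ?_
  filter_upwards [htranslate.coeFn_toLp, hφ.coeFn_toLp] with t hgt hφt
  exact congrArg₂ (· * ·) hgt hφt

lemma integral_add_mul_conj_eq_convolution (g ψ : ℝ → ℂ) :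
    (fun x => ∫ t, g (x + t) * conj (ψ t)) =
      (fun s => conj (ψ (-s))) ⋆[ContinuousLinearMap.mul ℂ ℂ] g := by
  ext x
  rw [convolution_mul, ← integral_neg_eq_self]
  simp [mul_comm, sub_eq_add_neg]

lemma integrable_integral_add_mul_conj {g ψ : ℝ → ℂ} (hg : Integrable g) (hψ : Integrable ψ) :
    Integrable fun x => ∫ t, g (x + t) * conj (ψ t) := by
  rw [integral_add_mul_conj_eq_convolution]
  exact (Complex.conjCLE.integrable_comp_iff.2 hψ.comp_neg).integrable_convolution _ hg

lemma fourier_conj_comp_neg (ψ : ℝ → ℂ) (ν : ℝ) :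
    𝓕 (fun s => conj (ψ (-s))) ν = conj (𝓕 ψ ν) := by
  rw [Real.fourier_real_eq_integral_exp_smul, Real.fourier_real_eq_integral_exp_smul,
    ← integral_conj, ← integral_neg_eq_self]
  simp [← Complex.exp_conj, Complex.conj_ofNat]

lemma fourier_integral_add_mul_conj {g ψ : ℝ → ℂ} (hg : Integrable g) (hψ : Integrable ψ)
    (ν : ℝ) :
    𝓕 (fun x => ∫ t, g (x + t) * conj (ψ t)) ν = 𝓕 g ν * conj (𝓕 ψ ν) := by
  have hψ_conj : Integrable fun s => conj (ψ (-s)) :=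
    Complex.conjCLE.integrable_comp_iff.2 hψ.comp_neg
  rw [integral_add_mul_conj_eq_convolution, Real.fourier_mul_convolution_eq hψ_conj hg,
    fourier_conj_comp_neg, mul_comm]

lemma tendsto_integral_exp_neg_mul_abs_mul_fourierInt_mul_conj {g ψ : ℝ → ℂ}
    (hg : Integrable g) (hψ : Integrable ψ) (hψ_bdd : MemLp ψ ∞) :
    Tendsto (fun ε : ℝ => ∫ ω, conj (fourierInt ψ ω) * fourierInt g ω *
        (Real.exp (-ε * |ω|) : ℂ))
      (𝓝[>] 0) (𝓝 (2 * Real.pi * ∫ t, g t * conj (ψ t))) := by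
  have : Fact ((1 : ℝ≥0∞) ≠ ∞) := ⟨ENNReal.one_ne_top⟩
  have hconj_bdd : MemLp (fun t => conj (ψ t)) ∞ := hψ_bdd.star
  have hcont := continuous_integral_add_mul (memLp_one_iff_integrable.2 hg) hconj_bdd
  have hinversion := (tendsto_integral_exp_neg_mul_abs_smul_fourier
    (integrable_integral_add_mul_conj hg hψ) hcont.continuousAt).const_mul (2 * Real.pi : ℂ)
  simp only [zero_add] at hinversion
  refine hinversion.congr fun ε => ?_
  have hscale := Measure.integral_comp_div (fun ν => (Real.exp (-(2 * Real.pi * ε) * |ν|) : ℂ) •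
    𝓕 (fun x => ∫ t, g (x + t) * conj (ψ t)) ν) (2 * Real.pi)
  rw [abs_of_pos Real.two_pi_pos, Complex.real_smul, Complex.ofReal_mul,
    Complex.ofReal_ofNat] at hscale
  refine hscale.symm.trans (integral_congr_ae (Eventually.of_forall fun ω => ?_))
  have hexponent : -(2 * Real.pi * ε) * |ω / (2 * Real.pi)| = -ε * |ω| := by
    rw [abs_div, abs_of_pos Real.two_pi_pos]
    field_simp
  simp only [fourier_integral_add_mul_conj hg hψ, fourierInt_eq_fourier, smul_eq_mul, hexponent]
  ring

lemma hasAbelIntegralOn_conj_fourierInt_mul_fourierInt {g ψ : ℝ → ℂ} (hg : Integrable g)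
    (hψ : Integrable ψ) (hψ_bdd : MemLp ψ ∞) :
    HasAbelIntegralOn (fun ω => conj (fourierInt ψ ω) * fourierInt g ω) univ
      (2 * Real.pi * ∫ t, g t * conj (ψ t)) := by
  refine ⟨fun ε hε => integrableOn_univ.2 ?_, by
    simpa only [setIntegral_univ] using
      tendsto_integral_exp_neg_mul_abs_mul_fourierInt_mul_conj hg hψ hψ_bdd⟩
  have hcont : Continuous fun ω => conj (fourierInt ψ ω) * fourierInt g ω :=
    (Complex.continuous_conj.comp (continuous_fourierInt hψ)).mul (continuous_fourierInt hg)
  refine (integrable_exp_neg_mul_abs hε).ofReal.bdd_mul (c := (∫ t, ‖ψ t‖) * ∫ t, ‖g t‖)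
    hcont.aestronglyMeasurable (Eventually.of_forall fun ω => ?_)
  rw [norm_mul, RCLike.norm_conj]
  gcongr
  exacts [norm_fourierInt_le ψ ω, norm_fourierInt_le g ω]

end Correlation

section WaveletTransform

lemma integral_comp_add_mul {E : Type*} [NormedAddCommGroup E] [NormedSpace ℝ E] (F : ℝ → E)
    (b : ℝ) {a : ℝ} (ha : 0 < a) : ∫ t, F (b + a * t) = a⁻¹ • ∫ t, F t := by
  rw [Measure.integral_comp_mul_left fun t => F (b + t), integral_add_left_eq_self,
    abs_of_pos (inv_pos.2 ha)]

lemma fourierInt_comp_add_mul (f : ℝ → ℂ) (b : ℝ) {a : ℝ} (ha : 0 < a) (ω : ℝ) :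
    fourierInt (fun t => f (b + a * t)) ω =
      (a : ℂ)⁻¹ * (Complex.exp (Complex.I * b * (ω / a : ℝ)) * fourierInt f (ω / a)) := by
  have ha_ne : (a : ℂ) ≠ 0 := mod_cast ha.ne'
  have hphase (t : ℝ) : Complex.exp (-(Complex.I * t * ω)) =
      Complex.exp (Complex.I * b * (ω / a : ℝ)) *
        Complex.exp (-(Complex.I * (b + a * t : ℝ) * (ω / a : ℝ))) := by
    rw [← Complex.exp_add]
    push_cast
    congr 1
    field_simp
    ring
  simp only [fourierInt, hphase, mul_assoc (Complex.exp _) (Complex.exp _)]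
  rw [integral_const_mul, integral_comp_add_mul
    (fun x : ℝ => Complex.exp (-(Complex.I * x * (ω / a : ℝ))) * f x) b ha, Complex.real_smul,
    Complex.ofReal_inv, mul_left_comm]

lemma waveletTransform_eq_sqrt_mul (ψ f : ℝ → ℂ) (b : ℝ) {a : ℝ} (ha : 0 < a) :
    waveletTransform ψ f b a = (Real.sqrt a : ℂ) * ∫ t, f (b + a * t) * conj (ψ t) := by
  have hchange := integral_comp_add_mul (fun t => f t * conj (ψ ((t - b) / a))) b ha
  simp only [add_sub_cancel_left, mul_div_cancel_left₀ _ ha.ne'] at hchange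
  have hsqrt : Real.sqrt a * a⁻¹ = (Real.sqrt a)⁻¹ := by
    rw [← div_eq_mul_inv, Real.sqrt_div_self]
  rw [hchange, Complex.real_smul, ← mul_assoc, ← Complex.ofReal_mul, hsqrt, waveletTransform]

lemma hasAbelIntegralOn_waveletTransform {ψ f : ℝ → ℂ} (hψ : Integrable ψ) (hψ_bdd : MemLp ψ ∞)
    (hf : Integrable f) (b : ℝ) {a : ℝ} (ha : 0 < a) :
    HasAbelIntegralOn (fun u => conj (fourierInt ψ u) *
        (Complex.exp (Complex.I * b * (u / a : ℝ)) * fourierInt f (u / a))) univ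
      (2 * Real.pi * Real.sqrt a * waveletTransform ψ f b a) := by
  have hg : Integrable fun t => f (b + a * t) := (hf.comp_add_left b).comp_mul_left' ha.ne'
  have hparseval := (hasAbelIntegralOn_conj_fourierInt_mul_fourierInt hg hψ hψ_bdd).const_mul a
  have ha_ne : (a : ℂ) ≠ 0 := mod_cast ha.ne'
  have hsqrt : (Real.sqrt a : ℂ) * Real.sqrt a = a := mod_cast Real.mul_self_sqrt ha.le
  have hvalue : 2 * Real.pi * Real.sqrt a * waveletTransform ψ f b a =
      a * (2 * Real.pi * ∫ t, f (b + a * t) * conj (ψ t)) := by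
    rw [waveletTransform_eq_sqrt_mul ψ f b ha, ← hsqrt]
    ring
  rw [hvalue]
  refine hparseval.congr MeasurableSet.univ fun u _ => ?_
  simp only [fourierInt_comp_add_mul f b ha]
  field_simp

lemma rpow_add_half_eq_inv_sqrt_mul_pow {a : ℝ} (ha : 0 < a) (s : ℕ) :
    a ^ ((s : ℝ) + 1 / 2) = (Real.sqrt a)⁻¹ * a ^ (s + 1) := by
  rw [Real.rpow_add ha, Real.rpow_natCast, ← Real.sqrt_eq_rpow, pow_succ, mul_left_comm,
    inv_mul_eq_div, Real.div_sqrt]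

lemma sum_mul_rpow_add_half {a : ℝ} (ha : 0 < a) (t : Finset ℕ) (c M : ℕ → ℂ) :
    ∑ s ∈ t, c s * M s * ((a ^ ((s : ℝ) + 1 / 2) : ℝ) : ℂ) =
      (Real.sqrt a : ℂ)⁻¹ * ∑ s ∈ t, c s * (a ^ (s + 1) * M s) := by
  rw [Finset.mul_sum]
  refine Finset.sum_congr rfl fun s _ => ?_
  rw [rpow_add_half_eq_inv_sqrt_mul_pow ha]
  push_cast
  ring

namespace HasAbelIntegralOn

variable {h : ℝ → ℂ} {Mp Mm : ℂ} {s : ℕ}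

lemma pow_mul_univ (hpos : HasAbelIntegralOn (fun u => ((u ^ s : ℝ) : ℂ) * h u) (Ioi 0) Mp)
    (hneg : HasAbelIntegralOn (fun u => ((u ^ s : ℝ) : ℂ) * h (-u)) (Ioi 0) Mm) :
    HasAbelIntegralOn (fun u => (u : ℂ) ^ s * h u) univ (Mp + (-1) ^ s * Mm) := by
  refine univ_of_Ioi (by simpa using hpos) ?_
  refine (hneg.const_mul ((-1) ^ s)).congr measurableSet_Ioi fun u _ => ?_
  simp only [Complex.ofReal_neg, Complex.ofReal_pow, neg_pow (u : ℂ), mul_assoc]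

lemma pow_mul_comp_div {a : ℝ} (ha : 0 < a) {M : ℂ}
    (hh : HasAbelIntegralOn (fun u => (u : ℂ) ^ s * h u) univ M) :
    HasAbelIntegralOn (fun u => (u : ℂ) ^ s * h (u / a)) univ (a ^ (s + 1) * M) := by
  have ha_ne : (a : ℂ) ≠ 0 := mod_cast ha.ne'
  rw [pow_succ, mul_assoc]
  refine ((hh.comp_div ha).const_mul (a ^ s)).congr MeasurableSet.univ fun u _ => ?_
  simp only [Complex.ofReal_div, div_pow]
  field_simp

end HasAbelIntegralOn

theorem haar_wavelet_asymptotic_general {ψ : ℝ → ℂ} (hψ : Integrable ψ) (hψ_bdd : MemLp ψ ∞)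
    (c : ℕ → ℂ) {b : ℝ} (hb : b ≠ 0) {f : ℝ → ℂ} (hf : Integrable f) {h : ℝ → ℂ}
    (hdef : ∀ u : ℝ, h u = Complex.exp (Complex.I * b * u) * fourierInt f u) {β : ℝ} {bp bm : ℕ → ℂ}
    (hhp : ∀ N : ℕ,
      (fun u : ℝ => h u - Complex.exp (Complex.I * b * u) *
          ∑ r ∈ Finset.range N, bp r * ((u ^ (-(r : ℝ) - β) : ℝ) : ℂ))
        =O[atTop] fun u => u ^ (-(N : ℝ) - β))
    (hhm : ∀ N : ℕ,
      (fun u : ℝ => h (-u) - Complex.exp (-(Complex.I * b * u)) *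
          ∑ r ∈ Finset.range N, bm r * ((u ^ (-(r : ℝ) - β) : ℝ) : ℂ))
        =O[atTop] fun u => u ^ (-(N : ℝ) - β)) :
    ∃ Mp Mm : ℕ → ℂ,
      (∀ s : ℕ,
        Tendsto (fun ε : ℝ => ∫ u in Ioi (0 : ℝ),
            ((u ^ s : ℝ) : ℂ) * h u * ((Real.exp (-ε * u) : ℝ) : ℂ))
          (𝓝[>] 0) (𝓝 (Mp s))
        ∧ Tendsto (fun ε : ℝ => ∫ u in Ioi (0 : ℝ),
            ((u ^ s : ℝ) : ℂ) * h (-u) * ((Real.exp (-ε * u) : ℝ) : ℂ))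
          (𝓝[>] 0) (𝓝 (Mm s)))
      ∧ ∀ (n : ℕ) (a : ℝ), 0 < a → ∃ L : ℂ,
          Tendsto (fun ε : ℝ =>
              (∫ u in Ioi (0 : ℝ),
                (conj (fourierInt ψ u) - ∑ s ∈ Finset.range n, c s * (u : ℂ) ^ s) *
                  h (u / a) * ((Real.exp (-ε * u) : ℝ) : ℂ))
              + ∫ u in Ioi (0 : ℝ),
                (conj (fourierInt ψ (-u)) - ∑ s ∈ Finset.range n, c s * ((-u : ℝ) : ℂ) ^ s) *
                  h (-u / a) * ((Real.exp (-ε * u) : ℝ) : ℂ))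
            (𝓝[>] 0) (𝓝 L)
          ∧ waveletTransform ψ f b a
            = (((2 * Real.pi)⁻¹ : ℝ) : ℂ) *
              ((∑ s ∈ Finset.range n, c s * (Mp s + (-1 : ℂ) ^ s * Mm s) *
                  ((a ^ ((s : ℝ) + 1 / 2) : ℝ) : ℂ))
                + (((Real.sqrt a)⁻¹ : ℝ) : ℂ) * L) := by
  have hcont : Continuous h := by
    simp only [funext hdef]
    exact (by fun_prop : Continuous _).mul (continuous_fourierInt hf)
  choose Mp hMp using exists_hasAbelIntegralOn_pow_mul hb hcont hhp
  choose Mm hMm using exists_hasAbelIntegralOn_pow_mul (neg_ne_zero.2 hb)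
    (hcont.comp continuous_neg) (by simpa using hhm)
  refine ⟨Mp, Mm, fun s => ⟨(hMp s).tendsto_integral_Ioi, (hMm s).tendsto_integral_Ioi⟩,
    fun n a ha => ?_⟩
  have htransform := hasAbelIntegralOn_waveletTransform hψ hψ_bdd hf b ha
  simp only [← hdef] at htransform
  have hpoly := HasAbelIntegralOn.finset_sum (t := Finset.range n) fun s _ =>
    (((hMp s).pow_mul_univ (hMm s)).pow_mul_comp_div ha).const_mul (c s)
  have hremainder := (htransform.sub hpoly).congr (G := fun u => (conj (fourierInt ψ u) -
    ∑ s ∈ Finset.range n, c s * (u : ℂ) ^ s) * h (u / a)) MeasurableSet.univ fun u _ => by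
      simp only [sub_mul, Finset.sum_mul, mul_assoc]
  refine ⟨_, hremainder.tendsto_integral_Ioi_add_integral_Ioi_neg, ?_⟩
  have hsqrt : (Real.sqrt a : ℂ) ≠ 0 := mod_cast (Real.sqrt_pos.2 ha).ne'
  rw [sum_mul_rpow_add_half ha]
  push_cast
  field_simp
  ring

end WaveletTransform

section Haar

lemma haarWavelet_eq_indicator_sub_indicator :
    haarWavelet = (Ico 0 (1 / 2)).indicator 1 - (Ico (1 / 2) 1).indicator 1 := by
  ext1 t
  simp only [haarWavelet, Pi.sub_apply, indicator_apply, mem_Ico, Pi.one_apply]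
  split_ifs <;> grind

lemma memLp_haarWavelet (p : ℝ≥0∞) : MemLp haarWavelet p := by
  rw [haarWavelet_eq_indicator_sub_indicator]
  exact (memLp_indicator_const p measurableSet_Ico 1 (Or.inr (by simp))).sub
    (memLp_indicator_const p measurableSet_Ico 1 (Or.inr (by simp)))

lemma integral_mul_haarWavelet {F : ℝ → ℂ} (hF : Continuous F) :
    ∫ t, F t * haarWavelet t = (∫ t in (0 : ℝ)..1 / 2, F t) - ∫ t in (1 / 2 : ℝ)..1, F t := by
  have hint (x y : ℝ) : Integrable ((Ico x y).indicator F) :=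
    (hF.integrableOn_Icc.mono_set Ico_subset_Icc_self).integrable_indicator measurableSet_Ico
  have hmul (t : ℝ) : F t * haarWavelet t =
      (Ico 0 (1 / 2)).indicator F t - (Ico (1 / 2) 1).indicator F t := by
    simp only [haarWavelet_eq_indicator_sub_indicator, Pi.sub_apply, mul_sub, indicator_apply,
      Pi.one_apply, mul_ite, mul_one, mul_zero]
  simp only [hmul]
  rw [integral_sub (hint _ _) (hint _ _), integral_indicator measurableSet_Ico,
    integral_indicator measurableSet_Ico, integral_Ico_eq_integral_Ioc,
    integral_Ico_eq_integral_Ioc, intervalIntegral.integral_of_le (by norm_num),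
    intervalIntegral.integral_of_le (by norm_num)]

lemma conj_fourierInt_haarWavelet (u : ℝ) :
    conj (fourierInt haarWavelet u) =
      (∫ t in (0 : ℝ)..1 / 2, Complex.exp (Complex.I * u * t)) -
        ∫ t in (1 / 2 : ℝ)..1, Complex.exp (Complex.I * u * t) := by
  have hconj (t : ℝ) : conj (haarWavelet t) = haarWavelet t := by
    simp only [haarWavelet]
    split_ifs <;> simp
  rw [← integral_mul_haarWavelet (by fun_prop), fourierInt, ← integral_conj]
  simp [hconj, ← Complex.exp_conj, mul_right_comm]

lemma conj_fourierInt_haarWavelet_of_ne_zero {u : ℝ} (hu : u ≠ 0) :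
    conj (fourierInt haarWavelet u) = (2 * (Complex.exp (Complex.I * u / 2) - 1) -
      (Complex.exp (Complex.I * u) - 1)) / (Complex.I * u) := by
  have hIu : Complex.I * (u : ℂ) ≠ 0 := by simp [hu]
  rw [conj_fourierInt_haarWavelet, integral_exp_mul_complex hIu, integral_exp_mul_complex hIu]
  push_cast
  rw [mul_zero, Complex.exp_zero, mul_one, mul_one_div]
  ring

lemma hasSum_pow_succ_div_factorial (z : ℂ) :
    HasSum (fun s : ℕ => z ^ (s + 1) / ((s + 1).factorial : ℂ)) (Complex.exp z - 1) := by
  have hexp := NormedSpace.expSeries_div_hasSum_exp (𝔸 := ℂ) z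
  rw [← Complex.exp_eq_exp_ℂ, ← hasSum_nat_add_iff' 1] at hexp
  simpa using hexp

lemma haarCoeff_mul_pow {u : ℝ} (hu : u ≠ 0) (s : ℕ) :
    haarCoeff s * (u : ℂ) ^ s =
      (2 * ((Complex.I * u / 2) ^ (s + 1) / ((s + 1).factorial : ℂ)) -
        (Complex.I * u) ^ (s + 1) / ((s + 1).factorial : ℂ)) / (Complex.I * u) := by
  have hu_ne : (u : ℂ) ≠ 0 := mod_cast hu
  have hfactorial : ((s + 1).factorial : ℂ) ≠ 0 := mod_cast Nat.factorial_ne_zero _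
  rw [haarCoeff, zpow_neg, zpow_natCast, div_pow, mul_pow, pow_succ (2 : ℂ), pow_add Complex.I,
    Complex.I_sq, pow_succ Complex.I, pow_succ (u : ℂ)]
  field_simp
  ring

lemma hasSum_haarCoeff_mul_pow (u : ℝ) :
    HasSum (fun s : ℕ => haarCoeff s * (u : ℂ) ^ s) (conj (fourierInt haarWavelet u)) := by
  rcases eq_or_ne u 0 with rfl | hu
  · have hterms (s : ℕ) : haarCoeff s * ((0 : ℝ) : ℂ) ^ s = 0 := by
      cases s <;> simp [haarCoeff]
    have hvalue : conj (fourierInt haarWavelet 0) = 0 := by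
      rw [conj_fourierInt_haarWavelet]
      norm_num
    simpa only [hterms, hvalue] using hasSum_zero
  · simp only [haarCoeff_mul_pow hu, conj_fourierInt_haarWavelet_of_ne_zero hu]
    exact (((hasSum_pow_succ_div_factorial _).mul_left 2).sub
      (hasSum_pow_succ_div_factorial _)).div_const _

end Haar

/-- **Asymptotic expansion of the Haar wavelet transform for small `a`.**
With `ψ` the Haar wavelet and `c_s = i^{s+2}(1−2^{−s})/(s+1)!`, so that
`conj(ψ̂(u)) = Σ_{s=0}^∞ c_s u^s` for all `u` (the value at `u = 0` being the
removable-singularity value `0`); `b ≠ 0`, `f ∈ L¹ ∩ L²`, `h(u) = e^{ibu} f̂(u)` with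
`h(u) = O(|u|^ρ)` (`ρ > −1`) as `u → 0` and the stated expansions as `u → ±∞`.  Then
for every `n ≥ 1` the generalized Mellin transforms `M[h₊; s+1]`, `M[h₋; s+1]` exist
for `s < n`, the limit defining `δ_n(a)` exists, and `(W_ψ f)(b,a) =
(1/2π){Σ_{s<n} c_s (M[h₊;s+1] + (−1)^s M[h₋;s+1]) a^{s+1/2} + δ_n(a)}` where
`δ_n(a) = a^{−1/2}·(limit)`. -/
theorem haar_wavelet_asymptotic (b : ℝ) (hb : b ≠ 0)
    (f : ℝ → ℂ) (hf1 : Integrable f) (hf2 : MemLp f 2 volume)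
    (h : ℝ → ℂ) (hdef : ∀ u : ℝ, h u = Complex.exp (Complex.I * b * u) * fourierInt f u)
    (ρ : ℝ) (hρ : -1 < ρ)
    (hh0 : h =O[𝓝[≠] (0 : ℝ)] fun u => |u| ^ ρ)
    (β : ℝ) (hβ : 0 < β) (bp bm : ℕ → ℂ)
    (hhp : ∀ N : ℕ,
      (fun u : ℝ => h u - Complex.exp (Complex.I * b * u) *
          ∑ r ∈ Finset.range N, bp r * ((u ^ (-(r : ℝ) - β) : ℝ) : ℂ))
        =O[atTop] fun u => u ^ (-(N : ℝ) - β))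
    (hhm : ∀ N : ℕ,
      (fun u : ℝ => h (-u) - Complex.exp (-(Complex.I * b * u)) *
          ∑ r ∈ Finset.range N, bm r * ((u ^ (-(r : ℝ) - β) : ℝ) : ℂ))
        =O[atTop] fun u => u ^ (-(N : ℝ) - β)) :
    (∀ u : ℝ, HasSum (fun s : ℕ => haarCoeff s * (u : ℂ) ^ s)
      ((starRingEnd ℂ) (fourierInt haarWavelet u)))
    ∧ ∀ n : ℕ, 1 ≤ n →
      ∃ Mp Mm : ℕ → ℂ,
        (∀ s : ℕ, s < n →
          Tendsto (fun ε : ℝ => ∫ u in Ioi (0 : ℝ),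
              ((u ^ s : ℝ) : ℂ) * h u * ((Real.exp (-ε * u) : ℝ) : ℂ))
            (𝓝[>] 0) (𝓝 (Mp s))
          ∧ Tendsto (fun ε : ℝ => ∫ u in Ioi (0 : ℝ),
              ((u ^ s : ℝ) : ℂ) * h (-u) * ((Real.exp (-ε * u) : ℝ) : ℂ))
            (𝓝[>] 0) (𝓝 (Mm s)))
        ∧ ∀ a : ℝ, 0 < a → ∃ L : ℂ,
            Tendsto (fun ε : ℝ =>
                (∫ u in Ioi (0 : ℝ),
                  haarHatConjRem n u * h (u / a) * ((Real.exp (-ε * u) : ℝ) : ℂ))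
                + ∫ u in Ioi (0 : ℝ),
                  haarHatConjRem n (-u) * h (-u / a) * ((Real.exp (-ε * u) : ℝ) : ℂ))
              (𝓝[>] 0) (𝓝 L)
            ∧ waveletTransform haarWavelet f b a
              = (((2 * Real.pi)⁻¹ : ℝ) : ℂ) *
                ((∑ s ∈ Finset.range n, haarCoeff s * (Mp s + (-1 : ℂ) ^ s * Mm s) *
                    ((a ^ ((s : ℝ) + 1 / 2) : ℝ) : ℂ))
                  + (((Real.sqrt a)⁻¹ : ℝ) : ℂ) * L) := by
  obtain ⟨Mp, Mm, hM, hL⟩ := haar_wavelet_asymptotic_general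
    (memLp_one_iff_integrable.1 (memLp_haarWavelet 1)) (memLp_haarWavelet ⊤) haarCoeff hb hf1 hdef
    hhp hhm
  exact ⟨hasSum_haarCoeff_mul_pow, fun n _ => ⟨Mp, Mm, fun s _ => hM s, hL n⟩⟩
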